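/- Define a(m) to be the number of length-m strings of elements of ℤ/2ℤ that occur as m consecutive coefficients of (1+X)^k in (ZMod 2)[X] for some k ≥ 0 (where coefficients beyond the degree are 0). Then a(m) = m² − m + 2 for all m ≥ 1. -/

import Mathlib

open Polynomial

/-- A block `b` of length `m` is accessible for `1+X` mod 2 if it occurs as
`m` consecutive coefficients of some power of `1+X` in `(ZMod 2)[X]`. -/
def Accessible {m : ℕ} (b : Fin m → ZMod 2) : Prop :=
  ∃ k j : ℕ, ∀ i : Fin m, ((1 + X : Polynomial (ZMod 2)) ^ k).coeff (j + i) = b i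

/-!
Modulo 2, row `2k` of Pascal's triangle is row `k` with a zero inserted after each entry, and row
`2k + 1` is row `k` with each entry repeated. Splitting blocks by the parities of their row and of
their starting position, every block of length `m` is therefore the image of a shorter one under one
of four injections. Blocks of even rows starting at even and at odd positions share only the zero
block; for odd rows they share only the two constant blocks; and a block occurs both in an even and
in an odd row exactly if it is zero or a single one at one of its ends. With `a m` blocks of length
`m`, inclusion-exclusion gives `a m + 6 = 2 * a ⌈m / 2⌉ + a ⌊m / 2⌋ + a (⌊m / 2⌋ + 1)` for `2 ≤ m`,
and `m ^ 2 - m + 2` is the solution with `a 1 = 2` and `a 2 = 4`.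
-/

section PrimeModulus

variable {p : ℕ} [Fact p.Prime]

theorem natCast_choose_eq_mod_mul_div (n i : ℕ) :
    (n.choose i : ZMod p) = (n % p).choose (i % p) * (n / p).choose (i / p) := by
  exact_mod_cast (ZMod.natCast_eq_natCast_iff _ _ _).2
    Choose.choose_modEq_choose_mod_mul_choose_div_nat

theorem natCast_choose_add_prime_pow (n r i : ℕ) :
    ((n + p ^ r).choose i : ZMod p) =
      n.choose i + if p ^ r ≤ i then (n.choose (i - p ^ r) : ZMod p) else 0 := by
  have frobenius : (1 + X : (ZMod p)[X]) ^ (n + p ^ r) = (1 + X) ^ n + (1 + X) ^ n * X ^ p ^ r := by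
    rw [pow_add, add_pow_char_pow, one_pow, mul_add, mul_one]
  simp only [← coeff_one_add_X_pow, frobenius, coeff_add, coeff_mul_X_pow']

theorem natCast_prime_pow_sub_one_choose {r i : ℕ} (hi : i < p ^ r) :
    ((p ^ r - 1).choose i : ZMod p) = (-1) ^ i := by
  induction i with
  | zero => simp
  | succ i ih =>
    have pascal : (p ^ r).choose (i + 1) = (p ^ r - 1).choose i + (p ^ r - 1).choose (i + 1) := by
      rw [← Nat.choose_succ_succ', Nat.sub_add_cancel (by lia)]
    have vanish : ((p ^ r).choose (i + 1) : ZMod p) = 0 :=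
      (ZMod.natCast_eq_zero_iff _ _).2 (Nat.Prime.dvd_choose_pow Fact.out i.succ_ne_zero hi.ne)
    rw [pascal, Nat.cast_add, ih (by lia)] at vanish
    rw [pow_succ, mul_neg_one, neg_eq_of_add_eq_zero_right vanish]

end PrimeModulus

theorem natCast_choose_two_mul (k i : ℕ) :
    ((2 * k).choose i : ZMod 2) = if Even i then (k.choose (i / 2) : ZMod 2) else 0 := by
  rw [natCast_choose_eq_mod_mul_div, Nat.mul_mod_right, Nat.mul_div_cancel_left k two_pos]
  split_ifs with hi
  · simp [Nat.even_iff.1 hi]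
  · simp [Nat.not_even_iff.1 hi]

theorem natCast_choose_two_mul_add_one (k i : ℕ) :
    ((2 * k + 1).choose i : ZMod 2) = k.choose (i / 2) := by
  rw [natCast_choose_eq_mod_mul_div, Nat.mul_add_mod_self_left, Nat.mul_add_div two_pos]
  rcases Nat.mod_two_eq_zero_or_one i with hi | hi <;> simp [hi]

section Interleaving

variable {α : Type*} {m : ℕ}

/-- The block carrying the letters of `f` at its even positions and zeros at its odd ones. -/
def evenSpread [Zero α] (m : ℕ) (f : Fin ((m + 1) / 2) → α) : Fin m → α :=
  fun i => if Even (i : ℕ) then f ⟨i / 2, by lia⟩ else 0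

/-- The block carrying the letters of `f` at its odd positions and zeros at its even ones. -/
def oddSpread [Zero α] (m : ℕ) (f : Fin (m / 2) → α) : Fin m → α :=
  fun i => if hi : Odd (i : ℕ) then f ⟨i / 2, by grind⟩ else 0

/-- The block repeating each letter of `f`, the first repetition being complete; the last one is
cut off if `m` is odd. -/
def evenDouble (m : ℕ) (f : Fin ((m + 1) / 2) → α) : Fin m → α :=
  fun i => f ⟨i / 2, by lia⟩

/-- The block repeating each letter of `f` except the first, of which only the second copy is
present; the last repetition is cut off if `m` is even. -/
def oddDouble (m : ℕ) (f : Fin (m / 2 + 1) → α) : Fin m → α :=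
  fun i => f ⟨(i + 1) / 2, by lia⟩

theorem evenSpread_injective [Zero α] : Function.Injective (evenSpread (α := α) m) := by
  intro f g h
  ext i
  simpa [evenSpread] using congrFun h ⟨2 * i, by lia⟩

theorem oddSpread_injective [Zero α] : Function.Injective (oddSpread (α := α) m) := by
  intro f g h
  ext i
  have half : (2 * (i : ℕ) + 1) / 2 = i := by lia
  simpa [oddSpread, half] using congrFun h ⟨2 * i + 1, by lia⟩

theorem evenDouble_injective : Function.Injective (evenDouble (α := α) m) := by
  intro f g h
  ext i
  simpa [evenDouble] using congrFun h ⟨2 * i, by lia⟩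

theorem oddDouble_injective (hm : m ≠ 0) : Function.Injective (oddDouble (α := α) m) := by
  intro f g h
  ext i
  have half : (2 * (i : ℕ) - 1 + 1) / 2 = i := by lia
  simpa [oddDouble, half] using congrFun h ⟨2 * i - 1, by lia⟩

theorem evenSpread_zero [Zero α] : evenSpread (α := α) m 0 = 0 := by
  ext i
  simp [evenSpread]

theorem oddSpread_zero [Zero α] : oddSpread (α := α) m 0 = 0 := by
  ext i
  simp [oddSpread]

theorem evenSpread_eq_zero_of_eq_oddSpread [Zero α] {f : Fin ((m + 1) / 2) → α}
    {g : Fin (m / 2) → α} (h : evenSpread m f = oddSpread m g) : evenSpread m f = 0 := by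
  ext i
  by_cases hi : Even (i : ℕ)
  · simp [h, oddSpread, hi]
  · simp [evenSpread, hi]

theorem evenDouble_eq_const_of_eq_oddDouble {n : ℕ} {f : Fin ((n + 1 + 1) / 2) → α}
    {g : Fin ((n + 1) / 2 + 1) → α} (h : evenDouble (n + 1) f = oddDouble (n + 1) g) :
    evenDouble (n + 1) f = Function.const _ (evenDouble (n + 1) f 0) := by
  ext i
  rw [Function.const_apply]
  induction i using Fin.induction with
  | zero => rfl
  | succ i ih =>
    rw [← ih]
    rcases Nat.even_or_odd (i : ℕ) with hi | hi
    · exact congrArg f (Fin.ext (by grind))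
    · rw [h]
      exact congrArg g (Fin.ext (by grind))

/-- Each pair of equal neighbours contains a forced zero, so only an end of the block that belongs
to no pair can be nonzero, and if both ends are unpaired, then one of them is a forced zero. -/
theorem forall_ne_zero_or_forall_ne_last_eq_zero [Zero α] {n s t : ℕ} {b : Fin (n + 1) → α}
    (hzero : ∀ i : Fin (n + 1), Odd (s + i) → b i = 0)
    (hpair : ∀ i : Fin n, Even (t + i) → b i.castSucc = b i.succ) :
    (∀ i ≠ 0, b i = 0) ∨ ∀ i ≠ Fin.last n, b i = 0 := by
  have hpair_zero (i : Fin n) (hi : Even (t + i)) : b i.castSucc = 0 ∧ b i.succ = 0 := by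
    rcases Nat.even_or_odd (s + i) with hs | hs
    · have := hzero i.succ (by grind)
      exact ⟨(hpair i hi).trans this, this⟩
    · have := hzero i.castSucc hs
      exact ⟨this, (hpair i hi).symm.trans this⟩
  by_cases hst : Odd t ∧ Even s
  · left
    intro i hi
    obtain ⟨i, rfl⟩ := Fin.exists_succ_eq.2 hi
    by_cases hti : Even (t + i)
    · exact (hpair_zero i hti).2
    · exact hzero _ (by grind)
  · right
    intro i hi
    obtain ⟨i, rfl⟩ := Fin.exists_castSucc_eq.2 hi
    by_cases hti : Even (t + i)
    · exact (hpair_zero i hti).1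
    by_cases hsi : Odd (s + i)
    · exact hzero _ hsi
    have hpos : 0 < (i : ℕ) := by grind
    have hpred := (hpair_zero ⟨i - 1, by lia⟩ (by grind)).2
    rwa [show Fin.succ ⟨i - 1, _⟩ = i.castSucc from Fin.ext (Nat.sub_add_cancel hpos)] at hpred

end Interleaving

/-- The entries at positions `j, …, j + m - 1` of row `k` of Pascal's triangle modulo 2. -/
def binomBlock (m k j : ℕ) : Fin m → ZMod 2 :=
  fun i => (k.choose (j + i) : ZMod 2)

theorem binomBlock_two_mul_two_mul (m k j : ℕ) :
    binomBlock m (2 * k) (2 * j) = evenSpread m (binomBlock _ k j) := by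
  ext i
  simp only [binomBlock, evenSpread, natCast_choose_two_mul, Nat.mul_add_div two_pos]
  exact if_congr (by grind) rfl rfl

theorem binomBlock_two_mul_two_mul_add_one (m k j : ℕ) :
    binomBlock m (2 * k) (2 * j + 1) = oddSpread m (binomBlock _ k (j + 1)) := by
  ext i
  simp only [binomBlock, oddSpread, natCast_choose_two_mul]
  split_ifs with hji hi hi
  · rw [show (2 * j + 1 + (i : ℕ)) / 2 = j + 1 + i / 2 by grind]
  all_goals grind

theorem binomBlock_two_mul_add_one_two_mul (m k j : ℕ) :
    binomBlock m (2 * k + 1) (2 * j) = evenDouble m (binomBlock _ k j) := by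
  ext i
  simp only [binomBlock, evenDouble, natCast_choose_two_mul_add_one, Nat.mul_add_div two_pos]

theorem binomBlock_two_mul_add_one_two_mul_add_one (m k j : ℕ) :
    binomBlock m (2 * k + 1) (2 * j + 1) = oddDouble m (binomBlock _ k j) := by
  ext i
  simp only [binomBlock, oddDouble, natCast_choose_two_mul_add_one]
  rw [add_assoc, Nat.mul_add_div two_pos, add_comm 1]

theorem binomBlock_add_two_pow {k r : ℕ} (hk : k < 2 ^ r) (m j : ℕ) :
    binomBlock m (k + 2 ^ r) (j + 2 ^ r) = binomBlock m k j := by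
  ext i
  simp only [binomBlock, natCast_choose_add_prime_pow]
  rw [Nat.choose_eq_zero_of_lt (by lia), if_pos (by lia), Nat.cast_zero, zero_add]
  congr 2
  lia

theorem binomBlock_self (n k : ℕ) : binomBlock (n + 1) k k = Pi.single 0 1 := by
  ext i
  refine Fin.cases (by simp [binomBlock]) (fun i => ?_) i
  simp [binomBlock, Nat.choose_eq_zero_of_lt]

theorem binomBlock_succ_self (m k : ℕ) : binomBlock m k (k + 1) = 0 := by
  ext i
  simp [binomBlock, Nat.choose_eq_zero_of_lt (show k < k + 1 + i by lia)]

theorem binomBlock_two_pow_add_eq_single_last {n k r : ℕ} (hk : k + n < 2 ^ r) :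
    binomBlock (n + 1) (2 ^ r + k) (2 ^ r - n) = Pi.single (Fin.last n) 1 := by
  ext i
  simp only [binomBlock, add_comm (2 ^ r) k, natCast_choose_add_prime_pow]
  rw [Nat.choose_eq_zero_of_lt (by lia), Nat.cast_zero, zero_add]
  rcases eq_or_ne i (Fin.last n) with rfl | hi
  · rw [Fin.val_last, Nat.sub_add_cancel (by lia)]
    simp
  · have := Fin.val_lt_last hi
    rw [if_neg (by lia), Pi.single_eq_of_ne hi]

theorem binomBlock_two_pow_sub_one_zero {m r : ℕ} (hm : m ≤ 2 ^ r) :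
    binomBlock m (2 ^ r - 1) 0 = 1 := by
  ext i
  rw [binomBlock, zero_add, natCast_prime_pow_sub_one_choose (by lia)]
  simp [ZModModule.neg_eq_self]

/-- The accessible blocks of length `m`. -/
def accessibleBlocks (m : ℕ) : Set (Fin m → ZMod 2) := {b | Accessible b}

/-- The blocks of length `m` occurring in an even row of Pascal's triangle modulo 2. -/
def evenRowBlocks (m : ℕ) : Set (Fin m → ZMod 2) := {b | ∃ k j, binomBlock m (2 * k) j = b}

/-- The blocks of length `m` occurring in an odd row of Pascal's triangle modulo 2. -/
def oddRowBlocks (m : ℕ) : Set (Fin m → ZMod 2) := {b | ∃ k j, binomBlock m (2 * k + 1) j = b}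

theorem mem_accessibleBlocks {m : ℕ} {b : Fin m → ZMod 2} :
    b ∈ accessibleBlocks m ↔ ∃ k j, binomBlock m k j = b := by
  simp only [accessibleBlocks, Accessible, Set.mem_ofPred_eq, coeff_one_add_X_pow, funext_iff,
    binomBlock]

theorem binomBlock_mem_accessibleBlocks (m k j : ℕ) : binomBlock m k j ∈ accessibleBlocks m :=
  mem_accessibleBlocks.2 ⟨k, j, rfl⟩

theorem zero_mem_accessibleBlocks (m : ℕ) : 0 ∈ accessibleBlocks m :=
  mem_accessibleBlocks.2 ⟨0, 1, binomBlock_succ_self m 0⟩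

theorem const_mem_accessibleBlocks (m : ℕ) (a : ZMod 2) :
    Function.const _ a ∈ accessibleBlocks m := by
  fin_cases a
  · exact zero_mem_accessibleBlocks m
  · exact mem_accessibleBlocks.2
      ⟨2 ^ m - 1, 0, binomBlock_two_pow_sub_one_zero Nat.lt_two_pow_self.le⟩

theorem exists_binomBlock_succ_eq {m : ℕ} {b : Fin m → ZMod 2} (hb : b ∈ accessibleBlocks m) :
    ∃ k j, binomBlock m k (j + 1) = b := by
  obtain ⟨k, j, rfl⟩ := mem_accessibleBlocks.1 hb
  refine ⟨k + 2 ^ k, j + (2 ^ k - 1), ?_⟩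
  rw [add_assoc, Nat.sub_add_cancel Nat.one_le_two_pow, binomBlock_add_two_pow Nat.lt_two_pow_self]

theorem accessibleBlocks_eq_union (m : ℕ) :
    accessibleBlocks m = evenRowBlocks m ∪ oddRowBlocks m := by
  ext b
  rw [mem_accessibleBlocks]
  constructor
  · rintro ⟨k, j, rfl⟩
    rcases Nat.even_or_odd' k with ⟨k, rfl | rfl⟩
    · exact Or.inl ⟨k, j, rfl⟩
    · exact Or.inr ⟨k, j, rfl⟩
  · rintro (⟨k, j, rfl⟩ | ⟨k, j, rfl⟩)
    exacts [⟨_, _, rfl⟩, ⟨_, _, rfl⟩]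

theorem evenRowBlocks_eq_union (m : ℕ) :
    evenRowBlocks m =
      evenSpread m '' accessibleBlocks _ ∪ oddSpread m '' accessibleBlocks _ := by
  ext b
  constructor
  · rintro ⟨k, j, rfl⟩
    rcases Nat.even_or_odd' j with ⟨j, rfl | rfl⟩
    · exact Or.inl ⟨_, binomBlock_mem_accessibleBlocks _ k j,
        (binomBlock_two_mul_two_mul m k j).symm⟩
    · exact Or.inr ⟨_, binomBlock_mem_accessibleBlocks _ k (j + 1),
        (binomBlock_two_mul_two_mul_add_one m k j).symm⟩
  · rintro (⟨f, hf, rfl⟩ | ⟨f, hf, rfl⟩)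
    · obtain ⟨k, j, rfl⟩ := mem_accessibleBlocks.1 hf
      exact ⟨k, 2 * j, binomBlock_two_mul_two_mul m k j⟩
    · obtain ⟨k, j, rfl⟩ := exists_binomBlock_succ_eq hf
      exact ⟨k, 2 * j + 1, binomBlock_two_mul_two_mul_add_one m k j⟩

theorem oddRowBlocks_eq_union (m : ℕ) :
    oddRowBlocks m =
      evenDouble m '' accessibleBlocks _ ∪ oddDouble m '' accessibleBlocks _ := by
  ext b
  constructor
  · rintro ⟨k, j, rfl⟩
    rcases Nat.even_or_odd' j with ⟨j, rfl | rfl⟩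
    · exact Or.inl ⟨_, binomBlock_mem_accessibleBlocks _ k j,
        (binomBlock_two_mul_add_one_two_mul m k j).symm⟩
    · exact Or.inr ⟨_, binomBlock_mem_accessibleBlocks _ k j,
        (binomBlock_two_mul_add_one_two_mul_add_one m k j).symm⟩
  · rintro (⟨f, hf, rfl⟩ | ⟨f, hf, rfl⟩) <;> obtain ⟨k, j, rfl⟩ := mem_accessibleBlocks.1 hf
    · exact ⟨k, 2 * j, binomBlock_two_mul_add_one_two_mul m k j⟩
    · exact ⟨k, 2 * j + 1, binomBlock_two_mul_add_one_two_mul_add_one m k j⟩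

theorem evenSpread_image_inter_oddSpread_image (m : ℕ) :
    evenSpread m '' accessibleBlocks _ ∩ oddSpread m '' accessibleBlocks _ = {0} := by
  refine Set.Subset.antisymm ?_ (Set.singleton_subset_iff.2
    ⟨⟨0, zero_mem_accessibleBlocks _, evenSpread_zero⟩,
      ⟨0, zero_mem_accessibleBlocks _, oddSpread_zero⟩⟩)
  rintro _ ⟨⟨f, -, rfl⟩, ⟨g, -, h⟩⟩
  exact evenSpread_eq_zero_of_eq_oddSpread h.symm

theorem evenDouble_image_inter_oddDouble_image (n : ℕ) :
    evenDouble (n + 1) '' accessibleBlocks _ ∩ oddDouble (n + 1) '' accessibleBlocks _ =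
      Set.range (Function.const _) := by
  refine Set.Subset.antisymm ?_ (Set.range_subset_iff.2 fun a =>
    ⟨⟨_, const_mem_accessibleBlocks _ a, rfl⟩, ⟨_, const_mem_accessibleBlocks _ a, rfl⟩⟩)
  rintro _ ⟨⟨f, -, rfl⟩, ⟨g, -, h⟩⟩
  exact ⟨_, (evenDouble_eq_const_of_eq_oddDouble h.symm).symm⟩

theorem eq_zero_or_eq_single_one {ι : Type*} [DecidableEq ι] {b : ι → ZMod 2} {a : ι}
    (h : ∀ i ≠ a, b i = 0) : b = 0 ∨ b = Pi.single a 1 := by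
  have hb : b = Pi.single a (b a) := by
    ext i
    rcases eq_or_ne i a with rfl | hi
    · rw [Pi.single_eq_same]
    · rw [h i hi, Pi.single_eq_of_ne hi]
  rcases eq_or_ne (b a) 0 with ha | ha
  · exact Or.inl (by rw [hb, ha, Pi.single_zero])
  · have ha_one : b a = 1 := Fin.eq_one_of_ne_zero (b a) ha
    exact Or.inr (by rw [hb, ha_one])

theorem evenRowBlocks_inter_oddRowBlocks_subset (n : ℕ) :
    evenRowBlocks (n + 1) ∩ oddRowBlocks (n + 1) ⊆
      {0, Pi.single 0 1, Pi.single (Fin.last n) 1} := by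
  rintro b ⟨⟨k, s, hks⟩, ⟨l, t, hlt⟩⟩
  have hzero (i : Fin (n + 1)) (hi : Odd (s + i)) : b i = 0 := by
    rw [← hks, binomBlock, natCast_choose_two_mul, if_neg (Nat.not_even_iff_odd.2 hi)]
  have hpair (i : Fin n) (hi : Even (t + i)) : b i.castSucc = b i.succ := by
    simp only [← hlt, binomBlock, natCast_choose_two_mul_add_one, Fin.val_castSucc, Fin.val_succ]
    rw [show (t + ((i : ℕ) + 1)) / 2 = (t + i) / 2 by grind]
  rcases forall_ne_zero_or_forall_ne_last_eq_zero hzero hpair with h | h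
  · rcases eq_zero_or_eq_single_one h with rfl | rfl <;> simp
  · rcases eq_zero_or_eq_single_one h with rfl | rfl <;> simp

theorem evenRowBlocks_inter_oddRowBlocks (n : ℕ) :
    evenRowBlocks (n + 1) ∩ oddRowBlocks (n + 1) =
      {0, Pi.single 0 1, Pi.single (Fin.last n) 1} := by
  refine Set.Subset.antisymm (evenRowBlocks_inter_oddRowBlocks_subset n) ?_
  have hlast (k : ℕ) (hk : k ≤ 1) :
      binomBlock (n + 1) (2 * 2 ^ n + k) (2 ^ (n + 1) - n) = Pi.single (Fin.last n) 1 := by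
    have : n + 1 < 2 ^ (n + 1) := Nat.lt_two_pow_self
    rw [← pow_succ']
    exact binomBlock_two_pow_add_eq_single_last (by lia)
  rintro _ (rfl | rfl | rfl)
  · exact ⟨⟨0, 1, binomBlock_succ_self _ 0⟩, ⟨0, 2, binomBlock_succ_self _ 1⟩⟩
  · exact ⟨⟨0, 0, binomBlock_self n 0⟩, ⟨0, 1, binomBlock_self n 1⟩⟩
  · exact ⟨⟨2 ^ n, _, hlast 0 zero_le_one⟩, ⟨2 ^ n, _, hlast 1 le_rfl⟩⟩

theorem ncard_evenRowBlocks_add_one (m : ℕ) :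
    (evenRowBlocks m).ncard + 1 =
      (accessibleBlocks ((m + 1) / 2)).ncard + (accessibleBlocks (m / 2)).ncard := by
  have h := Set.ncard_union_add_ncard_inter (evenSpread m '' accessibleBlocks _)
    (oddSpread m '' accessibleBlocks _)
  rwa [← evenRowBlocks_eq_union, evenSpread_image_inter_oddSpread_image, Set.ncard_singleton,
    Set.ncard_image_of_injective _ evenSpread_injective,
    Set.ncard_image_of_injective _ oddSpread_injective] at h

theorem ncard_oddRowBlocks_add_two {m : ℕ} (hm : m ≠ 0) :
    (oddRowBlocks m).ncard + 2 =
      (accessibleBlocks ((m + 1) / 2)).ncard + (accessibleBlocks (m / 2 + 1)).ncard := by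
  obtain ⟨n, rfl⟩ := Nat.exists_eq_succ_of_ne_zero hm
  have h := Set.ncard_union_add_ncard_inter (evenDouble (n + 1) '' accessibleBlocks _)
    (oddDouble (n + 1) '' accessibleBlocks _)
  rwa [← oddRowBlocks_eq_union, evenDouble_image_inter_oddDouble_image,
    ← Set.image_univ, Set.ncard_image_of_injective _ Function.const_injective, Set.ncard_univ,
    Nat.card_zmod, Set.ncard_image_of_injective _ evenDouble_injective,
    Set.ncard_image_of_injective _ (oddDouble_injective hm)] at h

theorem ncard_evenRowBlocks_inter_oddRowBlocks {m : ℕ} (hm : 2 ≤ m) :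
    (evenRowBlocks m ∩ oddRowBlocks m).ncard = 3 := by
  obtain ⟨n, rfl⟩ := Nat.exists_eq_add_of_le' hm
  have single_ne_zero (a : Fin (n + 2)) : (0 : Fin (n + 2) → ZMod 2) ≠ Pi.single a 1 :=
    (Pi.single_ne_zero_iff.2 one_ne_zero).symm
  have single_ne_single : (Pi.single 0 1 : Fin (n + 2) → ZMod 2) ≠ Pi.single (Fin.last _) 1 := by
    intro h
    simpa using congrFun h 0
  exact Set.ncard_eq_three.2 ⟨_, _, _, single_ne_zero _, single_ne_zero _, single_ne_single,
    evenRowBlocks_inter_oddRowBlocks (n + 1)⟩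

theorem ncard_accessibleBlocks_add_six {m : ℕ} (hm : 2 ≤ m) :
    (accessibleBlocks m).ncard + 6 = 2 * (accessibleBlocks ((m + 1) / 2)).ncard +
      (accessibleBlocks (m / 2)).ncard + (accessibleBlocks (m / 2 + 1)).ncard := by
  have h := Set.ncard_union_add_ncard_inter (evenRowBlocks m) (oddRowBlocks m)
  rw [← accessibleBlocks_eq_union, ncard_evenRowBlocks_inter_oddRowBlocks hm] at h
  have heven := ncard_evenRowBlocks_add_one m
  have hodd := ncard_oddRowBlocks_add_two (m := m) (by lia)
  lia

theorem accessibleBlocks_one : accessibleBlocks 1 = Set.univ := by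
  refine Set.eq_univ_of_forall fun b => mem_accessibleBlocks.2 ?_
  have search : ∀ b : Fin 1 → ZMod 2, ∃ j < 2, binomBlock 1 0 j = b := by decide
  obtain ⟨j, -, h⟩ := search b
  exact ⟨0, j, h⟩

theorem accessibleBlocks_two : accessibleBlocks 2 = Set.univ := by
  refine Set.eq_univ_of_forall fun b => mem_accessibleBlocks.2 ?_
  have search : ∀ b : Fin 2 → ZMod 2, ∃ k < 3, ∃ j < 2, binomBlock 2 k j = b := by decide
  obtain ⟨k, -, j, -, h⟩ := search b
  exact ⟨k, j, h⟩

theorem ncard_accessibleBlocks_add_self {m : ℕ} (hm : m ≠ 0) :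
    (accessibleBlocks m).ncard + m = m ^ 2 + 2 := by
  induction m using Nat.strong_induction_on with
  | _ m ih =>
    obtain rfl | rfl | hm : m = 1 ∨ m = 2 ∨ 2 < m := by lia
    · simp [accessibleBlocks_one]
    · simp [accessibleBlocks_two]
    have hrec := ncard_accessibleBlocks_add_six hm.le
    have hceil := ih ((m + 1) / 2) (by lia) (by lia)
    have hfloor := ih (m / 2) (by lia) (by lia)
    have hfloor_succ := ih (m / 2 + 1) (by lia) (by lia)
    rcases Nat.even_or_odd' m with ⟨n, rfl | rfl⟩
    · rw [show (2 * n + 1) / 2 = n by lia] at hrec hceil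
      rw [show 2 * n / 2 = n by lia] at hrec hfloor hfloor_succ
      linarith
    · rw [show (2 * n + 1 + 1) / 2 = n + 1 by lia] at hrec hceil
      rw [show (2 * n + 1) / 2 = n by lia] at hrec hfloor hfloor_succ
      linarith

theorem count_accessible_blocks (m : ℕ) (hm : 1 ≤ m) :
    {b : Fin m → ZMod 2 | Accessible b}.ncard = m ^ 2 - m + 2 := by
  have hcount : {b : Fin m → ZMod 2 | Accessible b}.ncard + m = m ^ 2 + 2 :=
    ncard_accessibleBlocks_add_self (by lia)
  have hle : m ≤ m ^ 2 := Nat.le_self_pow two_ne_zero m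
  lia
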